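/- For every k ≥ 1 and every integer ℓ with 0 ≤ ℓ ≤ k, the number of permutations σ of {1,…,k} with ℓ(σ) = ℓ is at most 2·(2k)^{k−ℓ}. -/

import Mathlib

/-- The extension `σ̃` of a permutation `σ` of `{1,…,k}` to `{0,1,…,k+1}`, with
`σ̃(0) = 0` and `σ̃(k+1) = k+1`.  Here `σ : Equiv.Perm (Fin k)` acts on `{0,…,k-1}`,
shifted by one. -/
def sigmaTilde (k : ℕ) (σ : Equiv.Perm (Fin k)) (j : ℕ) : ℕ :=
  if h : 1 ≤ j ∧ j ≤ k then ((σ ⟨j - 1, by omega⟩ : Fin k) : ℕ) + 1 else j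

/-- The point `(j, σ(j))` is a *peak*: `σ(j) < min {σ̃(j-1), σ̃(j+1)}`. -/
def IsPeakAt (k : ℕ) (σ : Equiv.Perm (Fin k)) (j : ℕ) : Prop :=
  sigmaTilde k σ j < min (sigmaTilde k σ (j - 1)) (sigmaTilde k σ (j + 1))

/-- The point `(j, σ(j))` is a *valley*: `σ(j) > max {σ̃(j-1), σ̃(j+1)}`. -/
def IsValleyAt (k : ℕ) (σ : Equiv.Perm (Fin k)) (j : ℕ) : Prop :=
  max (sigmaTilde k σ (j - 1)) (sigmaTilde k σ (j + 1)) < sigmaTilde k σ j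

/-- The point `(j, σ(j))` is a *ladder*: `σ(j) - 1 ∈ {σ̃(j-1), σ̃(j+1)}` and the point is
not a valley. -/
def IsLadderAt (k : ℕ) (σ : Equiv.Perm (Fin k)) (j : ℕ) : Prop :=
  (sigmaTilde k σ j - 1 = sigmaTilde k σ (j - 1) ∨
    sigmaTilde k σ j - 1 = sigmaTilde k σ (j + 1)) ∧ ¬IsValleyAt k σ j

instance (k : ℕ) (σ : Equiv.Perm (Fin k)) (j : ℕ) : Decidable (IsPeakAt k σ j) := by
  unfold IsPeakAt; infer_instance

instance (k : ℕ) (σ : Equiv.Perm (Fin k)) (j : ℕ) : Decidable (IsValleyAt k σ j) := by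
  unfold IsValleyAt; infer_instance

instance (k : ℕ) (σ : Equiv.Perm (Fin k)) (j : ℕ) : Decidable (IsLadderAt k σ j) := by
  unfold IsLadderAt; infer_instance

/-- `ℓ(σ)`: the number of `j ∈ {1,…,k}` such that `(j, σ(j))` is a ladder. -/
def ladderCount (k : ℕ) (σ : Equiv.Perm (Fin k)) : ℕ :=
  ((Finset.Icc 1 k).filter fun j => IsLadderAt k σ j).card

/-- The degree of a permutation: `deg(σ) := k - ℓ(σ)`. -/
def permDegree (k : ℕ) (σ : Equiv.Perm (Fin k)) : ℕ := k - ladderCount k σ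

/-!
Read `σ` through its inverse `p = σ̃⁻¹`. If `p v` is a ladder position, then `p (v - 1)` and `p v`
are neighbouring positions, so every third position lies on the same side of both, and in a
comparison of `v` with another value one may replace `v` by `v - 1`. Repeating this reduces the
comparison of the positions of two values to one that involves the value `0`, whose position is
minimal, or two values at non-ladder positions, or two consecutive values `v`, `v + 1` with `v` at
a non-ladder position. Hence `σ` is determined by the list, in order of position, of its values at
the `k - ℓ` non-ladder positions, each with the direction from `p v` to `p (v + 1)`: there are at
most `2 * k` choices for each entry.
-/

open Finset SimpleGraph

section LinearOrder

variable {α β : Type*} [LinearOrder α] [LinearOrder β] {a b c : α}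

theorem lt_iff_lt_of_hasse_adj_right (h : (hasse α).Adj a b) (ha : c ≠ a) (hb : c ≠ b) :
    c < a ↔ c < b := by
  rcases hasse_adj.1 h with hab | hba
  · exact ⟨fun hc => hc.trans hab.lt, fun hc => (hab.le_of_lt hc).lt_of_ne ha⟩
  · exact ⟨fun hc => (hba.le_of_lt hc).lt_of_ne hb, fun hc => hc.trans hba.lt⟩

theorem lt_iff_lt_of_hasse_adj_left (h : (hasse α).Adj a b) (ha : c ≠ a) (hb : c ≠ b) :
    a < c ↔ b < c := by
  rw [← ha.symm.le_iff_lt, ← hb.symm.le_iff_lt, ← not_lt, ← not_lt,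
    lt_iff_lt_of_hasse_adj_right h ha hb]

theorem equiv_eq_of_lt_iff_lt [WellFoundedLT β] {γ : Type*} {e f : γ ≃ β}
    (h : ∀ x y, e x < e y ↔ f x < f y) : e = f := by
  let g : β ≃o β := OrderIso.ofRelIsoLT ⟨e.symm.trans f, fun {x y} => by simp [← h]⟩
  have hg : g = OrderIso.refl β := Subsingleton.elim _ _
  ext x
  simpa [g] using (DFunLike.congr_fun hg (e x)).symm

end LinearOrder

/-- The sequence `c` encodes the injective function `p` on `{0, …, n}`, whose minimum is `p 0`:
the entries `(v, up)` of `c` are listed in increasing order of `p v`, the flag `up` tells whether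
`p` increases from `v` to `v + 1`, and `p` moves to a neighbouring element at every step
`v, v + 1` such that `v + 1` does not occur in `c`. The flag of an entry `(n, up)` is arbitrary. -/
structure IsRunCode {ι α : Type*} [LinearOrder ι] [LinearOrder α] (n : ℕ) (p : ℕ → α)
    (c : ι → ℕ × Bool) : Prop where
  injOn : Set.InjOn p (Set.Iic n)
  zero_le : ∀ v ≤ n, p 0 ≤ p v
  strictMono : StrictMono fun i => p (c i).1
  up_iff : ∀ i, (c i).1 < n → ((c i).2 ↔ p (c i).1 < p ((c i).1 + 1))
  adj : ∀ v < n, (∀ i, (c i).1 ≠ v + 1) → (hasse α).Adj (p v) (p (v + 1))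

namespace IsRunCode

variable {ι α β : Type*} [LinearOrder ι] [LinearOrder α] [LinearOrder β] {n a b : ℕ}
  {p : ℕ → α} {q : ℕ → β} {c : ι → ℕ × Bool}

theorem ne (h : IsRunCode n p c) (ha : a ≤ n) (hb : b ≤ n) (hab : a ≠ b) : p a ≠ p b :=
  fun heq => hab (h.injOn ha hb heq)

theorem zero_lt (h : IsRunCode n p c) (hb : b ≤ n) (h0 : b ≠ 0) : p 0 < p b :=
  (h.zero_le b hb).lt_of_ne (h.ne n.zero_le hb h0.symm)

theorem lt_succ_iff (h : IsRunCode n p c) (hc : ∀ i, (c i).1 ≠ b + 1) (hab : a < b)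
    (hb : b < n) : p a < p (b + 1) ↔ p a < p b :=
  (lt_iff_lt_of_hasse_adj_right (h.adj b hb hc) (h.ne (by omega) (by omega) (by omega))
    (h.ne (by omega) (by omega) (by omega))).symm

theorem succ_lt_iff (h : IsRunCode n p c) (hc : ∀ i, (c i).1 ≠ a + 1) (hab : a + 1 < b)
    (hb : b ≤ n) : p (a + 1) < p b ↔ p a < p b :=
  (lt_iff_lt_of_hasse_adj_left (h.adj a (by omega) hc) (h.ne (by omega) (by omega) (by omega))
    (h.ne (by omega) (by omega) (by omega))).symm

theorem lt_iff_lt_of_lt (hp : IsRunCode n p c) (hq : IsRunCode n q c) (hab : a < b)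
    (hb : b ≤ n) : p a < p b ↔ q a < q b := by
  induction b generalizing a with
  | zero => omega
  | succ b ihb =>
    induction a with
    | zero => exact iff_of_true (hp.zero_lt hb (by omega)) (hq.zero_lt hb (by omega))
    | succ a iha =>
      by_cases ha : ∃ i, (c i).1 = a + 1
      · obtain ⟨i, hi⟩ := ha
        by_cases hcb : ∃ j, (c j).1 = b + 1
        · obtain ⟨j, hj⟩ := hcb
          rw [← hi, ← hj]
          exact hp.strictMono.lt_iff_lt.trans hq.strictMono.lt_iff_lt.symm
        · push Not at hcb
          rcases (Nat.lt_succ_iff.1 hab).eq_or_lt with rfl | hlt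
          · rw [← hi]
            exact (hp.up_iff i (by omega)).symm.trans (hq.up_iff i (by omega))
          · rw [hp.lt_succ_iff hcb hlt hb, hq.lt_succ_iff hcb hlt hb]
            exact ihb hlt (by omega)
      · push Not at ha
        rw [hp.succ_lt_iff ha hab hb, hq.succ_lt_iff ha hab hb]
        exact iha (by omega)

theorem lt_iff_lt (hp : IsRunCode n p c) (hq : IsRunCode n q c) (ha : a ≤ n) (hb : b ≤ n) :
    p a < p b ↔ q a < q b := by
  rcases lt_trichotomy a b with hab | rfl | hba
  · exact hp.lt_iff_lt_of_lt hq hab hb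
  · simp only [lt_irrefl]
  · rw [← (hp.ne ha hb hba.ne').le_iff_lt, ← (hq.ne ha hb hba.ne').le_iff_lt, ← not_lt, ← not_lt,
      hp.lt_iff_lt_of_lt hq hba ha]

end IsRunCode

section Ladder

variable {k : ℕ} (σ : Equiv.Perm (Fin k))

theorem sigmaTilde_zero : sigmaTilde k σ 0 = 0 := rfl

theorem sigmaTilde_val_add_one (i : Fin k) : sigmaTilde k σ (i + 1) = σ i + 1 := by
  simp [sigmaTilde]

theorem sigmaTilde_of_lt {j : ℕ} (hj : k < j) : sigmaTilde k σ j = j :=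
  dif_neg (by omega)

theorem exists_val_add_one_eq {j : ℕ} (hj : j ∈ Icc 1 k) : ∃ i : Fin k, (i : ℕ) + 1 = j := by
  rw [mem_Icc] at hj
  exact ⟨⟨j - 1, by omega⟩, Nat.sub_add_cancel hj.1⟩

theorem sigmaTilde_mem_Icc {j : ℕ} (hj : j ∈ Icc 1 k) : sigmaTilde k σ j ∈ Icc 1 k := by
  obtain ⟨i, rfl⟩ := exists_val_add_one_eq hj
  rw [sigmaTilde_val_add_one, mem_Icc]
  exact ⟨Nat.le_add_left 1 _, (σ i).isLt⟩

theorem sigmaTilde_symm_leftInverse :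
    Function.LeftInverse (sigmaTilde k σ.symm) (sigmaTilde k σ) := by
  intro j
  rcases Nat.eq_zero_or_pos j with rfl | hj
  · rfl
  rcases le_or_gt j k with hjk | hkj
  · obtain ⟨i, rfl⟩ := exists_val_add_one_eq (mem_Icc.2 ⟨hj, hjk⟩)
    rw [sigmaTilde_val_add_one, sigmaTilde_val_add_one, Equiv.symm_apply_apply]
  · rw [sigmaTilde_of_lt σ hkj, sigmaTilde_of_lt _ hkj]

theorem sigmaTilde_symm_rightInverse :
    Function.RightInverse (sigmaTilde k σ.symm) (sigmaTilde k σ) :=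
  sigmaTilde_symm_leftInverse σ.symm

theorem sigmaTilde_injective : Function.Injective (sigmaTilde k σ) :=
  (sigmaTilde_symm_leftInverse σ).injective

variable {σ} in
theorem IsLadderAt.hasse_adj_sigmaTilde_symm {v : ℕ}
    (h : IsLadderAt k σ (sigmaTilde k σ.symm (v + 1))) :
    (hasse ℕ).Adj (sigmaTilde k σ.symm v) (sigmaTilde k σ.symm (v + 1)) := by
  have hpos : sigmaTilde k σ.symm (v + 1) ≠ 0 :=
    (sigmaTilde_injective σ.symm).ne v.succ_ne_zero
  have hv := h.1.imp (congrArg (sigmaTilde k σ.symm)) (congrArg (sigmaTilde k σ.symm))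
  rw [sigmaTilde_symm_rightInverse, Nat.add_sub_cancel, sigmaTilde_symm_leftInverse,
    sigmaTilde_symm_leftInverse] at hv
  rw [hasse_adj, Nat.covBy_iff_add_one_eq, Nat.covBy_iff_add_one_eq]
  omega

/-- The positions in `{1, …, k}` at which `σ` has no ladder; their number is `deg σ`. -/
def nonladders : Finset ℕ := {j ∈ Icc 1 k | ¬IsLadderAt k σ j}

theorem card_nonladders : #(nonladders σ) = permDegree k σ := by
  have hsum := card_filter_add_card_filter_not (s := Icc 1 k) (IsLadderAt k σ)
  rw [Nat.card_Icc, Nat.add_sub_cancel] at hsum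
  rw [permDegree, ladderCount]
  exact Nat.eq_sub_of_add_eq' hsum

variable {σ} in
theorem hasse_adj_of_notMem_nonladders {v : ℕ} (hv : v < k)
    (h : sigmaTilde k σ.symm (v + 1) ∉ nonladders σ) :
    (hasse ℕ).Adj (sigmaTilde k σ.symm v) (sigmaTilde k σ.symm (v + 1)) := by
  have hmem : sigmaTilde k σ.symm (v + 1) ∈ Icc 1 k :=
    sigmaTilde_mem_Icc _ (mem_Icc.2 ⟨Nat.le_add_left 1 v, hv⟩)
  refine IsLadderAt.hasse_adj_sigmaTilde_symm (not_not.1 fun hladder => h ?_)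
  exact mem_filter.2 ⟨hmem, hladder⟩

/-- The values of `σ` at its non-ladder positions, in increasing order of position, each flagged
by whether the next larger value occurs further to the right. -/
def nonladderCode {d : ℕ} (h : permDegree k σ = d) (i : Fin d) : ℕ × Bool :=
  let j := (nonladders σ).orderEmbOfFin ((card_nonladders σ).trans h) i
  (sigmaTilde k σ j, decide (j < sigmaTilde k σ.symm (sigmaTilde k σ j + 1)))

theorem nonladderCode_fst_mem_Icc {d : ℕ} (h : permDegree k σ = d) (i : Fin d) :
    (nonladderCode σ h i).1 ∈ Icc 1 k :=
  sigmaTilde_mem_Icc σ (mem_filter.1 (orderEmbOfFin_mem _ _ i)).1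

theorem isRunCode_nonladderCode {d : ℕ} (h : permDegree k σ = d) :
    IsRunCode k (sigmaTilde k σ.symm) (nonladderCode σ h) where
  injOn := (sigmaTilde_injective σ.symm).injOn
  zero_le v _ := Nat.zero_le (sigmaTilde k σ.symm v)
  strictMono i j hij := by
    simpa [nonladderCode, sigmaTilde_symm_leftInverse σ _] using hij
  up_iff i _ := by simp [nonladderCode, sigmaTilde_symm_leftInverse σ _]
  adj v hv hcode := by
    refine hasse_adj_of_notMem_nonladders hv fun hmem => ?_
    rw [← mem_coe, ← range_orderEmbOfFin _ ((card_nonladders σ).trans h)] at hmem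
    obtain ⟨i, hi⟩ := hmem
    exact hcode i <| (congrArg (sigmaTilde k σ) hi).trans (sigmaTilde_symm_rightInverse σ _)

variable {σ} in
theorem IsRunCode.perm_eq {ι : Type*} [LinearOrder ι] {τ : Equiv.Perm (Fin k)}
    {c : ι → ℕ × Bool} (hσ : IsRunCode k (sigmaTilde k σ.symm) c)
    (hτ : IsRunCode k (sigmaTilde k τ.symm) c) : σ = τ := by
  have horder (i j : Fin k) : σ.symm i < σ.symm j ↔ τ.symm i < τ.symm j := by
    simpa [sigmaTilde_val_add_one] using hσ.lt_iff_lt hτ i.isLt j.isLt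
  exact Equiv.symm_bijective.injective (equiv_eq_of_lt_iff_lt horder)

end Ladder

theorem card_perms_with_ladderCount_le_general (k ℓ : ℕ) :
    #{σ : Equiv.Perm (Fin k) | ladderCount k σ = ℓ} ≤ (2 * k) ^ (k - ℓ) := by
  let codes := Fintype.piFinset fun _ : Fin (k - ℓ) => Icc 1 k ×ˢ (univ : Finset Bool)
  have hcodes : #codes = (2 * k) ^ (k - ℓ) := by
    simp [codes, mul_comm]
  rw [← hcodes]
  refine card_le_card_of_forall_subsingleton
    (fun σ c => IsRunCode k (sigmaTilde k σ.symm) c) (fun σ hσ => ?_)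
    fun c _ σ hσ τ hτ => hσ.2.perm_eq hτ.2
  have hdeg : permDegree k σ = k - ℓ := congrArg (k - ·) (mem_filter.1 hσ).2
  refine ⟨nonladderCode σ hdeg, Fintype.mem_piFinset.2 fun i => ?_, isRunCode_nonladderCode σ hdeg⟩
  exact mem_product.2 ⟨nonladderCode_fst_mem_Icc σ hdeg i, mem_univ _⟩

/-- Estimate (7.9) of the paper (the counting step of Lemma 7.2): the number of
permutations `σ` of `{1,…,k}` with exactly `ℓ` ladder indices is at most `2·(2k)^{k-ℓ}`. -/
theorem card_perms_with_ladderCount_le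
    (k : ℕ) (hk : 1 ≤ k) (ℓ : ℕ) (hℓ : ℓ ≤ k) :
    ((Finset.univ : Finset (Equiv.Perm (Fin k))).filter fun σ => ladderCount k σ = ℓ).card
      ≤ 2 * (2 * k) ^ (k - ℓ) :=
  (card_perms_with_ladderCount_le_general k ℓ).trans (Nat.le_mul_of_pos_left _ two_pos)
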